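/- (Cross-term under ridge regularization.) Let λ ∈ ℝ and suppose a matrix C* and vector b* are such that the structural residuals satisfy Σ_{i=1}^N Δs_i = 0 and Σ_{i=1}^N Δs_i · x_iᵀ = λ·C*. Then the cross-term between the photometric and structural residuals equals λ·(‖C*‖_F² − tr(C*)): that is, Σ_{i=1}^N ⟨Δp_i, Δs_i⟩ = λ·(‖C*‖_F² − tr(C*)). -/

import Mathlib

open Finset Matrix

/-!
Since `⟨A x + b, s⟩ = tr (Aᵀ (s xᵀ)) + ⟨b, s⟩`, the cross-term depends on the structural residuals
`sᵢ` only through `∑ sᵢ = 0` and `∑ sᵢ xᵢᵀ = λ C`. With `A = C - 1` it is therefore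
`λ tr ((C - 1)ᵀ C)`.
-/

section CrossTerm

variable {ι m n R : Type*} [Fintype m] [Fintype n]

lemma mulVec_dotProduct_eq_trace [CommSemiring R] (A : Matrix m n R) (v : n → R) (w : m → R) :
    A *ᵥ v ⬝ᵥ w = trace (Aᵀ * vecMulVec w v) := by
  rw [mul_vecMulVec, trace_vecMulVec, mulVec_transpose, ← dotProduct_mulVec, dotProduct_comm]

lemma sum_mulVec_add_dotProduct [CommSemiring R] (t : Finset ι) (A : Matrix m n R) (b : m → R)
    (x : ι → n → R) (s : ι → m → R) :
    ∑ i ∈ t, (A *ᵥ x i + b) ⬝ᵥ s i =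
      trace (Aᵀ * ∑ i ∈ t, vecMulVec (s i) (x i)) + b ⬝ᵥ ∑ i ∈ t, s i := by
  simp only [add_dotProduct, sum_add_distrib, mulVec_dotProduct_eq_trace, Matrix.mul_sum,
    trace_sum, dotProduct_sum]

lemma trace_transpose_mul_self_eq_sum_sq [Semiring R] (A : Matrix m n R) :
    trace (Aᵀ * A) = ∑ k, ∑ l, A k l ^ 2 := by
  rw [sum_comm]
  simp only [trace, diag_apply, mul_apply, transpose_apply, sq]

theorem pal_ridge_cross_term_general [CommRing R] [Fintype ι] [DecidableEq n]
    (x s : ι → n → R) (lam : R) (C : Matrix n n R) (b : n → R) (hsum : ∑ i, s i = 0)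
    (hridge : ∑ i, vecMulVec (s i) (x i) = lam • C) :
    ∑ i, ((C - 1) *ᵥ x i + b) ⬝ᵥ s i = lam * ((∑ k, ∑ l, C k l ^ 2) - trace C) := by
  calc ∑ i, ((C - 1) *ᵥ x i + b) ⬝ᵥ s i
      = trace ((C - 1)ᵀ * lam • C) := by
        rw [sum_mulVec_add_dotProduct, hsum, hridge, dotProduct_zero, add_zero]
    _ = lam * (trace (Cᵀ * C) - trace C) := by
        rw [Matrix.mul_smul, trace_smul, smul_eq_mul, transpose_sub, transpose_one, Matrix.sub_mul,
          Matrix.one_mul, trace_sub]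
    _ = lam * ((∑ k, ∑ l, C k l ^ 2) - trace C) := by rw [trace_transpose_mul_self_eq_sum_sq]

end CrossTerm

/-- Cross-term under ridge regularization. If the structural residuals
`Δsᵢ = yᵢ − C*·xᵢ − b*` satisfy `∑ i, Δsᵢ = 0` and `∑ i, Δsᵢ · xᵢᵀ = λ·C*`,
then the cross-term between the photometric residuals
`Δpᵢ = (C* − I)·xᵢ + b*` and the structural residuals equals
`λ·(‖C*‖_F² − tr(C*))`. -/
theorem pal_ridge_cross_term
    (N : ℕ) (hN : 0 < N)
    (x y : Fin N → Fin 3 → ℝ)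
    (lam : ℝ)
    (Cstar : Matrix (Fin 3) (Fin 3) ℝ) (bstar : Fin 3 → ℝ)
    (h1 : (∑ i, (y i - Cstar.mulVec (x i) - bstar)) = 0)
    (h2 : (∑ i, vecMulVec (y i - Cstar.mulVec (x i) - bstar) (x i))
        = lam • Cstar) :
    (∑ i, ∑ j, ((Cstar - 1).mulVec (x i) + bstar) j *
        (y i - Cstar.mulVec (x i) - bstar) j) =
      lam * ((∑ k, ∑ l, (Cstar k l) ^ 2) - Matrix.trace Cstar) :=
  pal_ridge_cross_term_general x _ lam Cstar bstar h1 h2
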